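/- arXiv:1812.04086 — 2 statements merged into one kernel-verified Lean document; each statement's English description precedes it below -/
import Mathlib

section
/- Fix a finite horizon T > 0, a nonnegative Radon measure μ̃ on [0,T], and a convex normal integrand h̃ : [0,T] × ℝ^d → ℝ ∪ {±∞}. Let S̃_t := cl dom h̃_t and D_l(S̃) := {y ∈ D_l | y_t ∈ S̃_t for all t ∈ [0,T]}. Assume: (i) S̃_t = cl{y_t | y ∈ D_l(S̃)} for every t ∈ [0,T], and (ii) D_l(S̃) = cl(dom I_{h̃} ∩ D_l(S̃)), the closure taken in the supremum norm. If inf_{y∈D_l(S̃)} I_{h̃}(y) < +∞, then inf_{y∈D_l(S̃)} I_{h̃}(y) = ∫_{[0,T]} inf_{x∈ℝ^d} h̃_t(x) dμ̃(t). -/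
open MeasureTheory Filter Set Topology
open scoped ENNReal Classical

/-- The positive part of an extended real, as an extended nonnegative real. -/
noncomputable def erealPos (a : EReal) : ℝ≥0∞ := if a = ⊤ then ⊤ else ENNReal.ofReal a.toReal

/-- The integral of an extended-real-valued function, defined as `+∞` unless the
positive part is integrable. -/
noncomputable def eIntegral {α : Type*} [MeasurableSpace α] (μ : Measure α)
    (f : α → EReal) : EReal :=
  if ∫⁻ a, erealPos (f a) ∂μ = ⊤ then ⊤
  else ((∫⁻ a, erealPos (f a) ∂μ : ℝ≥0∞) : EReal) - ((∫⁻ a, erealPos (-f a) ∂μ : ℝ≥0∞) : EReal)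

/-- Euclidean space `ℝ^d`. -/
abbrev Euc (d : ℕ) := EuclideanSpace ℝ (Fin d)

/-- A function `[0,T] → ℝ^d` (modelled on `ℝ`) is càglàd: left-continuous on `(0,T]`
with right limits on `[0,T)`. -/
def IsCagladOn (T : ℝ) {d : ℕ} (y : ℝ → Euc d) : Prop :=
  (∀ t ∈ Set.Ioc (0:ℝ) T, Tendsto y (𝓝[<] t) (𝓝 (y t))) ∧
  (∀ t ∈ Set.Ico (0:ℝ) T, ∃ l, Tendsto y (𝓝[>] t) (𝓝 l))

/-- `h : [0,T] × ℝ^d → ℝ ∪ {±∞}` is a convex normal integrand: its epigraphical mapping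
`t ⇒ {(x,α) | h t x ≤ α}` is closed convex-valued and measurable. -/
def IsConvexNormalIntegrand (T : ℝ) {d : ℕ} (h : ℝ → Euc d → EReal) : Prop :=
  (∀ t ∈ Set.Icc (0:ℝ) T, IsClosed {p : Euc d × ℝ | h t p.1 ≤ (p.2 : EReal)} ∧
      Convex ℝ {p : Euc d × ℝ | h t p.1 ≤ (p.2 : EReal)}) ∧
  (∀ O : Set (Euc d × ℝ), IsOpen O →
      MeasurableSet {t : ℝ | t ∈ Set.Icc (0:ℝ) T ∧ ∃ p ∈ O, h t p.1 ≤ (p.2 : EReal)})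

/-!
Only the inequality `≤` is at stake. Shifting `h` by `k`, taking positive parts and letting `k → ∞`
reduces the integrals to Lebesgue integrals of `[0, ∞]`-valued functions.

The Sorgenfrey topology is hereditarily Lindelöf, so countably many left-continuous selections `zₙ`
with finite integral are enough for `{zₙ(t)}` to be dense in `dom h_t` at every `t`. By convexity
a dense subset of `dom h_t` meets the relative interior of each sublevel set, so
`inf h_t = infₙ h_t(zₙ(t))`, although `h_t` is merely lower semicontinuous.

To realise a finite infimum `min_{n ≤ N} h_t(zₙ(t))` approximately by a single càglàd selection,
paste the `zₙ`. Pasting along the measurable sets where `zₙ` is optimal would leave the càglàd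
class, but pasting along finite unions of intervals `(a, b]` does not, and these approximate every
measurable set in `μ`-measure. Absolute continuity of the integral controls the error. Monotone
convergence then lets `N → ∞`.
-/

section ExtendedRealIntegral

lemma coe_ennreal_sub_eq_of_add_eq {a b c d : ℝ≥0∞} (hb : b ≠ ⊤) (hd : d ≠ ⊤)
    (h : a + d = c + b) : (a : EReal) - b = c - d := by
  lift b to NNReal using hb
  lift d to NNReal using hd
  induction a with
  | top =>
    induction c with
    | top => rfl
    | coe c => exact absurd h.symm (by simp)
  | coe a =>
    induction c with
    | top => simp at h
    | coe c =>
      have hreal : (a : ℝ) - b = c - d := by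
        have : (a : ℝ) + d = c + b := by exact_mod_cast h
        linarith
      exact congrArg Real.toEReal hreal

lemma continuous_ereal_add_const {c : EReal} (hbot : c ≠ ⊥) (htop : c ≠ ⊤) :
    Continuous fun a : EReal => a + c :=
  continuous_iff_continuousAt.2 fun a =>
    (EReal.continuousAt_add (p := (a, c)) (.inr hbot) (.inr htop)).comp
      (f := fun a : EReal => (a, c)) (by fun_prop)

lemma coe_ennreal_iInf_sub {ι : Sort*} (u : ι → ℝ≥0∞) {c : ℝ≥0∞} (hc : c ≠ ⊤) :
    ((⨅ i, u i : ℝ≥0∞) : EReal) - c = ⨅ i, ((u i : EReal) - c) := by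
  have hcont : Continuous fun x : ℝ≥0∞ => (x : EReal) - c :=
    (continuous_ereal_add_const (by simpa using hc) (by simp)).comp continuous_coe_ennreal_ereal
  exact Monotone.map_iInf_of_continuousAt hcont.continuousAt
    (fun x y hxy => EReal.sub_le_sub (by exact_mod_cast hxy) le_rfl) (by simp [EReal.top_sub, hc])

lemma coe_ennreal_sub_iSup {ι : Sort*} [Nonempty ι] {a : ℝ≥0∞} (ha : a ≠ ⊤) (u : ι → ℝ≥0∞) :
    (a : EReal) - (⨆ i, u i : ℝ≥0∞) = ⨅ i, ((a : EReal) - u i) := by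
  have hcont : Continuous fun x : ℝ≥0∞ => (a : EReal) - x := by
    simp_rw [sub_eq_add_neg, add_comm (a : EReal)]
    exact (continuous_ereal_add_const (by simp) (by simpa using ha)).comp
      continuous_coe_ennreal_ereal.neg
  exact Antitone.map_ciSup_of_continuousAt hcont.continuousAt
    (fun x y hxy => EReal.sub_le_sub le_rfl (by exact_mod_cast hxy))

lemma toENNReal_iInf_add_natCast {ι : Sort*} [Nonempty ι] (u : ι → EReal) (k : ℕ) :
    ((⨅ i, u i) + k).toENNReal = ⨅ i, (u i + k).toENNReal :=
  Monotone.map_ciInf_of_continuousAt (f := fun a : EReal => (a + k).toENNReal)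
    (EReal.continuous_toENNReal.comp
      (continuous_ereal_add_const (EReal.natCast_ne_bot k) (EReal.natCast_ne_top k))).continuousAt
    fun _ _ hab => EReal.toENNReal_le_toENNReal (by gcongr)

lemma toENNReal_add_natCast_add_min (a : EReal) (k : ℕ) :
    (a + k).toENNReal + min (k : ℝ≥0∞) (-a).toENNReal = a.toENNReal + k := by
  induction a with
  | bot => simp
  | top => simp [EReal.top_add_of_ne_bot (EReal.natCast_ne_bot k)]
  | coe x =>
    change ENNReal.ofReal (x + k) + min (k : ℝ≥0∞) (ENNReal.ofReal (-x)) = ENNReal.ofReal x + k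
    rw [← ENNReal.ofReal_natCast, ← ENNReal.ofReal_min]
    have hk : (0 : ℝ) ≤ k := k.cast_nonneg
    rcases le_total 0 x with hx | hx
    · rw [min_eq_right (by linarith), ENNReal.ofReal_of_nonpos (p := -x) (by linarith), add_zero,
        ENNReal.ofReal_add hx hk]
    rw [ENNReal.ofReal_of_nonpos hx, zero_add]
    rcases le_total (k : ℝ) (-x) with hkx | hkx
    · rw [min_eq_left hkx, ENNReal.ofReal_of_nonpos (by linarith), zero_add]
    · rw [min_eq_right hkx, ← ENNReal.ofReal_add (by linarith) (by linarith),
        add_neg_cancel_comm]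

variable {α : Type*} [MeasurableSpace α] {μ : Measure α} {f g : α → EReal}

-- `erealPos` is definitionally `EReal.toENNReal`.
lemma eIntegral_of_lintegral_eq_top (hf : ∫⁻ a, (f a).toENNReal ∂μ = ⊤) : eIntegral μ f = ⊤ :=
  if_pos hf

lemma eIntegral_of_lintegral_ne_top (hf : ∫⁻ a, (f a).toENNReal ∂μ ≠ ⊤) :
    eIntegral μ f = ((∫⁻ a, (f a).toENNReal ∂μ : ℝ≥0∞) : EReal)
      - ((∫⁻ a, (-f a).toENNReal ∂μ : ℝ≥0∞) : EReal) :=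
  if_neg hf

lemma eIntegral_mono_ae (hfg : f ≤ᵐ[μ] g) : eIntegral μ f ≤ eIntegral μ g := by
  by_cases hg : ∫⁻ a, (g a).toENNReal ∂μ = ⊤
  · rw [eIntegral_of_lintegral_eq_top hg]
    exact le_top
  have hpos : ∫⁻ a, (f a).toENNReal ∂μ ≤ ∫⁻ a, (g a).toENNReal ∂μ :=
    lintegral_mono_ae (hfg.mono fun _ h => EReal.toENNReal_le_toENNReal h)
  have hneg : ∫⁻ a, (-g a).toENNReal ∂μ ≤ ∫⁻ a, (-f a).toENNReal ∂μ :=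
    lintegral_mono_ae (hfg.mono fun _ h =>
      EReal.toENNReal_le_toENNReal (EReal.neg_le_neg_iff.2 h))
  rw [eIntegral_of_lintegral_ne_top hg,
    eIntegral_of_lintegral_ne_top (ne_top_of_le_ne_top hg hpos)]
  exact EReal.sub_le_sub (by exact_mod_cast hpos) (by exact_mod_cast hneg)

lemma eIntegral_lt_top_iff : eIntegral μ f < ⊤ ↔ ∫⁻ a, (f a).toENNReal ∂μ ≠ ⊤ := by
  refine ⟨fun h hf => h.ne (eIntegral_of_lintegral_eq_top hf), fun hf => ?_⟩
  rw [eIntegral_of_lintegral_ne_top hf, sub_eq_add_neg]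
  exact EReal.add_lt_top (by simpa using hf) (by simp)

lemma iSup_natCast_min (a : ℝ≥0∞) : ⨆ k : ℕ, min (k : ℝ≥0∞) a = a := by
  rw [← iSup_inf_eq, ENNReal.iSup_natCast, top_inf_eq]

lemma lintegral_toENNReal_add_natCast (hf : AEMeasurable f μ) (k : ℕ) :
    ∫⁻ a, (f a + k).toENNReal ∂μ + ∫⁻ a, min (k : ℝ≥0∞) (-f a).toENNReal ∂μ
      = ∫⁻ a, (f a).toENNReal ∂μ + k * μ univ := by
  have hmin : AEMeasurable (fun a => min (k : ℝ≥0∞) (-f a).toENNReal) μ :=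
    aemeasurable_const.min (measurable_neg.comp_aemeasurable hf).ereal_toENNReal
  rw [← lintegral_add_right' _ hmin, ← lintegral_const, ← lintegral_add_right _ measurable_const]
  simp_rw [toENNReal_add_natCast_add_min]

lemma eIntegral_eq_iInf_truncation [IsFiniteMeasure μ] (hf : AEMeasurable f μ) :
    eIntegral μ f = ⨅ k : ℕ,
      (((∫⁻ a, (f a + k).toENNReal ∂μ : ℝ≥0∞) : EReal) - (k * μ univ : ℝ≥0∞)) := by
  have hmin (k : ℕ) : AEMeasurable (fun a => min (k : ℝ≥0∞) (-f a).toENNReal) μ :=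
    aemeasurable_const.min (measurable_neg.comp_aemeasurable hf).ereal_toENNReal
  have hmass (k : ℕ) : (k * μ univ : ℝ≥0∞) ≠ ⊤ :=
    ENNReal.mul_ne_top (ENNReal.natCast_ne_top k) (measure_ne_top μ univ)
  have hmin_ne_top (k : ℕ) : ∫⁻ a, min (k : ℝ≥0∞) (-f a).toENNReal ∂μ ≠ ⊤ :=
    ne_top_of_le_ne_top (hmass k) <|
      (lintegral_mono fun _ => min_le_left _ _).trans_eq (lintegral_const _)
  have hneg : ∫⁻ a, (-f a).toENNReal ∂μ
      = ⨆ k : ℕ, ∫⁻ a, min (k : ℝ≥0∞) (-f a).toENNReal ∂μ := by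
    rw [← lintegral_iSup' hmin (ae_of_all _ fun a j k hjk =>
      min_le_min_right _ (Nat.cast_le.2 hjk))]
    simp_rw [iSup_natCast_min]
  simp_rw [fun k => coe_ennreal_sub_eq_of_add_eq (hmass k) (hmin_ne_top k)
    (lintegral_toENNReal_add_natCast hf k)]
  by_cases hpos : ∫⁻ a, (f a).toENNReal ∂μ = ⊤
  · rw [eIntegral_of_lintegral_eq_top hpos]
    simp [hpos, EReal.top_sub, hmin_ne_top]
  · rw [eIntegral_of_lintegral_ne_top hpos, hneg, coe_ennreal_sub_iSup hpos]

lemma lintegral_toENNReal_add_natCast_ne_top [IsFiniteMeasure μ] (hf : AEMeasurable f μ)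
    (hf_lt : eIntegral μ f < ⊤) (k : ℕ) : ∫⁻ a, (f a + k).toENNReal ∂μ ≠ ⊤ := by
  refine ne_top_of_le_ne_top ?_
    (le_self_add.trans_eq (lintegral_toENNReal_add_natCast hf k))
  exact ENNReal.add_ne_top.2 ⟨eIntegral_lt_top_iff.1 hf_lt,
    ENNReal.mul_ne_top (ENNReal.natCast_ne_top k) (measure_ne_top μ univ)⟩

end ExtendedRealIntegral

section Decomposable

variable {α E : Type*} [MeasurableSpace α] {D : Set (α → E)}

/-- The measurable sets along which any two members of `D` can be pasted without leaving `D`. -/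
def pastingSets (D : Set (α → E)) : Set (Set α) :=
  {A | MeasurableSet A ∧ ∀ y ∈ D, ∀ z ∈ D, A.piecewise y z ∈ D}

/-- A weak form of Rockafellar's decomposability: instead of requiring that `D` be closed under
pasting along every measurable set, the sets along which it is generate the σ-algebra. -/
def IsDecomposable (D : Set (α → E)) : Prop :=
  ‹MeasurableSpace α› ≤ MeasurableSpace.generateFrom (pastingSets D)

lemma isSetAlgebra_pastingSets : IsSetAlgebra (pastingSets D) where
  empty_mem := ⟨.empty, fun y _ z hz => by rwa [piecewise_empty]⟩
  compl_mem A hA := ⟨hA.1.compl, fun y hy z hz => by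
    rw [piecewise_compl]
    exact hA.2 z hz y hy⟩
  union_mem A B hA hB := ⟨hA.1.union hB.1, fun y hy z hz => by
    convert hA.2 y hy _ (hB.2 y hy z hz) using 1
    funext t
    by_cases htA : t ∈ A <;> by_cases htB : t ∈ B <;> simp [htA, htB]⟩

lemma IsDecomposable.exists_pastingSet_measure_symmDiff_lt (hD : IsDecomposable D) (μ : Measure α)
    [IsFiniteMeasure μ] {A : Set α} (hA : MeasurableSet A) {δ : ℝ≥0∞} (hδ : 0 < δ) :
    ∃ V ∈ pastingSets D, μ (symmDiff V A) < δ :=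
  exists_measure_symmDiff_lt_of_generateFrom_isSetRing isSetAlgebra_pastingSets.isSetRing
    ⟨{univ}, countable_singleton _, singleton_subset_iff.2 isSetAlgebra_pastingSets.univ_mem,
      by simp⟩
    (hD.antisymm (MeasurableSpace.generateFrom_le fun _ hV => hV.1)) hA hδ

lemma sub_min_le_sub_min_add_sub (a b c d : ℝ≥0∞) : a - min b d ≤ (a - min b c) + (c - d) := by
  have hmin : min b c - min b d ≤ c - d := by
    rw [tsub_le_iff_right]
    rcases le_total b d with hbd | hdb
    · rw [min_eq_left hbd]
      exact (min_le_left b c).trans le_add_self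
    · rw [min_eq_right hdb]
      exact (min_le_right b c).trans le_tsub_add
  exact tsub_le_tsub_add_tsub.trans (by gcongr)

variable {μ : Measure α} [IsFiniteMeasure μ] {φ : α → E → ℝ≥0∞}

lemma IsDecomposable.exists_lintegral_sub_min_le (hD : IsDecomposable D) {y z : α → E}
    (hy : y ∈ D) (hz : z ∈ D) (hφy : AEMeasurable (fun t => φ t (y t)) μ)
    (hφz : AEMeasurable (fun t => φ t (z t)) μ) (hy_fin : ∫⁻ t, φ t (y t) ∂μ ≠ ⊤)
    (hz_fin : ∫⁻ t, φ t (z t) ∂μ ≠ ⊤) {ε : ℝ≥0∞} (hε : ε ≠ 0) :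
    ∃ v ∈ D, ∫⁻ t, φ t (v t) ∂μ ≠ ⊤ ∧
      ∫⁻ t, (φ t (v t) - min (φ t (y t)) (φ t (z t))) ∂μ ≤ ε := by
  have hsum : ∫⁻ t, (φ t (y t) + φ t (z t)) ∂μ ≠ ⊤ := by
    rw [lintegral_add_left' hφy]
    exact ENNReal.add_ne_top.2 ⟨hy_fin, hz_fin⟩
  obtain ⟨δ, hδ, hδε⟩ := exists_pos_setLIntegral_lt_of_measure_lt hsum hε
  set A : Set α := {t | hφy.mk _ t ≤ hφz.mk _ t} with hA
  have hA_ae : ∀ᵐ t ∂μ, t ∈ A ↔ φ t (y t) ≤ φ t (z t) := by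
    filter_upwards [hφy.ae_eq_mk, hφz.ae_eq_mk] with t hyt hzt
    rw [hA, mem_ofPred_eq, ← hyt, ← hzt]
  obtain ⟨V, hV, hVA⟩ := hD.exists_pastingSet_measure_symmDiff_lt μ
    (measurableSet_le hφy.measurable_mk hφz.measurable_mk : MeasurableSet A) hδ
  have hpaste_le (t : α) : φ t (V.piecewise y z t) ≤ φ t (y t) + φ t (z t) := by
    by_cases htV : t ∈ V <;> simp [htV]
  have hpaste_ae : ∀ᵐ t ∂μ, φ t (V.piecewise y z t) - min (φ t (y t)) (φ t (z t))
      ≤ (symmDiff V A).indicator (fun t => φ t (y t) + φ t (z t)) t := by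
    filter_upwards [hA_ae] with t htA
    by_cases ht : t ∈ symmDiff V A
    · rw [indicator_of_mem ht]
      exact tsub_le_self.trans (hpaste_le t)
    · have htV : t ∈ V ↔ φ t (y t) ≤ φ t (z t) := by
        rw [← htA]
        simpa [mem_symmDiff, not_or, iff_iff_implies_and_implies] using ht
      have hmin : φ t (V.piecewise y z t) = min (φ t (y t)) (φ t (z t)) := by
        by_cases hle : φ t (y t) ≤ φ t (z t)
        · simp [htV, hle]
        · simp [htV, hle, (not_le.1 hle).le]
      simp [hmin]
  exact ⟨V.piecewise y z, hV.2 y hy z hz, ne_top_of_le_ne_top hsum (lintegral_mono hpaste_le),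
    (lintegral_mono_ae hpaste_ae).trans ((lintegral_indicator_le _ _).trans (hδε _ hVA).le)⟩

lemma IsDecomposable.exists_lintegral_sub_finset_iInf_le (hD : IsDecomposable D)
    (hφ : ∀ y ∈ D, AEMeasurable (fun t => φ t (y t)) μ) {ι : Type*} {z : ι → α → E}
    (hz : ∀ i, z i ∈ D) (hz_fin : ∀ i, ∫⁻ t, φ t (z i t) ∂μ ≠ ⊤) {s : Finset ι}
    (hs : s.Nonempty) {ε : ℝ≥0∞} (hε : ε ≠ 0) :
    ∃ v ∈ D, ∫⁻ t, φ t (v t) ∂μ ≠ ⊤ ∧ ∫⁻ t, (φ t (v t) - ⨅ i ∈ s, φ t (z i t)) ∂μ ≤ ε := by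
  induction hs using Finset.Nonempty.cons_induction generalizing ε with
  | singleton i => exact ⟨z i, hz i, hz_fin i, by simp⟩
  | cons i s his _ ih =>
    have hε2 : ε / 2 ≠ 0 := by simpa using hε
    obtain ⟨w, hw, hw_fin, hw_le⟩ := ih hε2
    obtain ⟨v, hv, hv_fin, hv_le⟩ :=
      hD.exists_lintegral_sub_min_le (hz i) hw (hφ _ (hz i)) (hφ w hw) (hz_fin i) hw_fin hε2
    have hm : AEMeasurable (fun t => ⨅ j ∈ s, φ t (z j t)) μ :=
      AEMeasurable.biInf _ s.countable_toSet fun j _ => hφ _ (hz j)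
    refine ⟨v, hv, hv_fin, ?_⟩
    calc ∫⁻ t, (φ t (v t) - ⨅ j ∈ Finset.cons i s his, φ t (z j t)) ∂μ
        ≤ ∫⁻ t, ((φ t (v t) - min (φ t (z i t)) (φ t (w t)))
            + (φ t (w t) - ⨅ j ∈ s, φ t (z j t))) ∂μ := lintegral_mono fun t => ?_
      _ = ∫⁻ t, (φ t (v t) - min (φ t (z i t)) (φ t (w t))) ∂μ
            + ∫⁻ t, (φ t (w t) - ⨅ j ∈ s, φ t (z j t)) ∂μ :=
          lintegral_add_right' _ ((hφ w hw).sub hm)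
      _ ≤ ε / 2 + ε / 2 := add_le_add hv_le hw_le
      _ = ε := ENNReal.add_halves ε
    rw [Finset.cons_eq_insert, Finset.iInf_insert]
    exact sub_min_le_sub_min_add_sub _ _ _ _

lemma IsDecomposable.iInf_lintegral_le_lintegral_iInf (hD : IsDecomposable D)
    (hφ : ∀ y ∈ D, AEMeasurable (fun t => φ t (y t)) μ) {z : ℕ → α → E}
    (hz : ∀ n, z n ∈ D) (hz_fin : ∀ n, ∫⁻ t, φ t (z n t) ∂μ ≠ ⊤) :
    ⨅ y ∈ D, ∫⁻ t, φ t (y t) ∂μ ≤ ∫⁻ t, ⨅ n, φ t (z n t) ∂μ := by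
  set m : ℕ → α → ℝ≥0∞ := fun N t => ⨅ n ∈ Finset.range (N + 1), φ t (z n t)
  have hm (N : ℕ) : AEMeasurable (m N) μ :=
    AEMeasurable.biInf _ (Finset.countable_toSet _) fun n _ => hφ _ (hz n)
  have hm_anti (t : α) : Antitone fun N => m N t := fun M N hMN =>
    biInf_mono fun n hn => Finset.range_mono (Nat.succ_le_succ hMN) hn
  have hm_iInf (t : α) : ⨅ N, m N t = ⨅ n, φ t (z n t) :=
    (le_iInf fun n => (iInf_le _ n).trans (iInf₂_le n (Finset.self_mem_range_succ n))).antisymm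
      (le_iInf fun N => le_iInf₂ fun n _ => iInf_le _ n)
  have hm_fin : ∫⁻ t, m 0 t ∂μ ≠ ⊤ := by simpa [m] using hz_fin 0
  simp_rw [← hm_iInf, lintegral_iInf' hm (ae_of_all _ hm_anti) hm_fin]
  refine le_iInf fun N => ENNReal.le_of_forall_pos_le_add fun ε hε _ => ?_
  obtain ⟨v, hv, -, hv_le⟩ := hD.exists_lintegral_sub_finset_iInf_le hφ hz hz_fin
    (s := Finset.range (N + 1)) Finset.nonempty_range_add_one (ENNReal.coe_ne_zero.2 hε.ne')
  calc ⨅ y ∈ D, ∫⁻ t, φ t (y t) ∂μ ≤ ∫⁻ t, φ t (v t) ∂μ := iInf₂_le v hv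
    _ ≤ ∫⁻ t, (m N t + (φ t (v t) - m N t)) ∂μ := lintegral_mono fun t => le_add_tsub
    _ = ∫⁻ t, m N t ∂μ + ∫⁻ t, (φ t (v t) - m N t) ∂μ := lintegral_add_left' (hm N) _
    _ ≤ ∫⁻ t, m N t ∂μ + ε := by gcongr

theorem IsDecomposable.iInf_eIntegral (hD : IsDecomposable D) {h : α → E → EReal}
    (hmeas : ∀ y ∈ D, AEMeasurable (fun t => h t (y t)) μ) {z : ℕ → α → E} (hz : ∀ n, z n ∈ D)
    (hz_lt : ∀ n, eIntegral μ (fun t => h t (z n t)) < ⊤)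
    (hz_inf : ∀ᵐ t ∂μ, ⨅ x, h t x = ⨅ n, h t (z n t)) :
    ⨅ y ∈ D, eIntegral μ (fun t => h t (y t)) = eIntegral μ fun t => ⨅ x, h t x := by
  have hinf_meas : AEMeasurable (fun t => ⨅ x, h t x) μ :=
    (AEMeasurable.iInf fun n => hmeas (z n) (hz n)).congr (hz_inf.mono fun _ ht => ht.symm)
  refine le_antisymm ?_
    (le_iInf₂ fun y _ => eIntegral_mono_ae (ae_of_all _ fun t => iInf_le _ (y t)))
  rw [eIntegral_eq_iInf_truncation hinf_meas]
  refine le_iInf fun k => ?_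
  have hmass : (k * μ univ : ℝ≥0∞) ≠ ⊤ :=
    ENNReal.mul_ne_top (ENNReal.natCast_ne_top k) (measure_ne_top μ univ)
  have hshift_meas (y) (hy : y ∈ D) : AEMeasurable (fun t => (h t (y t) + k).toENNReal) μ :=
    (EReal.continuous_toENNReal.comp (continuous_ereal_add_const (EReal.natCast_ne_bot k)
      (EReal.natCast_ne_top k))).measurable.comp_aemeasurable (hmeas y hy)
  calc ⨅ y ∈ D, eIntegral μ (fun t => h t (y t))
      ≤ ⨅ y ∈ D, (((∫⁻ t, (h t (y t) + k).toENNReal ∂μ : ℝ≥0∞) : EReal)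
          - (k * μ univ : ℝ≥0∞)) := iInf₂_mono fun y hy =>
        (eIntegral_eq_iInf_truncation (hmeas y hy)).trans_le (iInf_le _ k)
    _ = ((⨅ y ∈ D, ∫⁻ t, (h t (y t) + k).toENNReal ∂μ : ℝ≥0∞) : EReal)
          - (k * μ univ : ℝ≥0∞) := by
        simp_rw [coe_ennreal_iInf_sub _ hmass]
    _ ≤ ((∫⁻ t, ⨅ n, (h t (z n t) + k).toENNReal ∂μ : ℝ≥0∞) : EReal)
          - (k * μ univ : ℝ≥0∞) := by
        refine EReal.sub_le_sub (EReal.coe_ennreal_le_coe_ennreal_iff.2 ?_) le_rfl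
        exact hD.iInf_lintegral_le_lintegral_iInf (φ := fun t x => (h t x + k).toENNReal)
          hshift_meas hz fun n =>
            lintegral_toENNReal_add_natCast_ne_top (hmeas _ (hz n)) (hz_lt n) k
    _ = ((∫⁻ t, ((⨅ x, h t x) + k).toENNReal ∂μ : ℝ≥0∞) : EReal)
          - (k * μ univ : ℝ≥0∞) := by
        have hshift : ∀ᵐ t ∂μ, ⨅ n, (h t (z n t) + k).toENNReal
            = ((⨅ x, h t x) + k).toENNReal :=
          hz_inf.mono fun t ht => by rw [ht, toENNReal_iInf_add_natCast]
        rw [lintegral_congr_ae hshift]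

end Decomposable

section ConvexFunctions

variable {V : Type*} [AddCommGroup V] [Module ℝ V]

lemma convex_setOf_lt_of_convex_epigraph {h : V → EReal}
    (hconv : Convex ℝ {p : V × ℝ | h p.1 ≤ (p.2 : EReal)}) (β : EReal) :
    Convex ℝ {x | h x < β} := by
  intro x hx y hy a b ha hb hab
  obtain ⟨r, hr, hrβ⟩ := EReal.lt_iff_exists_real_btwn.1 (max_lt hx hy)
  have hxr : (x, r) ∈ {p : V × ℝ | h p.1 ≤ (p.2 : EReal)} := (le_max_left _ _).trans hr.le
  have hyr : (y, r) ∈ {p : V × ℝ | h p.1 ≤ (p.2 : EReal)} := (le_max_right _ _).trans hr.le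
  have hcomb : h (a • x + b • y) ≤ ((a • r + b • r : ℝ) : EReal) := hconv hxr hyr ha hb hab
  rw [Convex.combo_self hab] at hcomb
  exact hcomb.trans_lt hrβ

lemma affineSpan_setOf_lt_eq_affineSpan_setOf_lt_top {h : V → EReal}
    (hconv : Convex ℝ {p : V × ℝ | h p.1 ≤ (p.2 : EReal)}) {β : EReal} {x : V} (hx : h x < β) :
    affineSpan ℝ {x | h x < β} = affineSpan ℝ {x | h x < ⊤} := by
  refine (affineSpan_mono ℝ fun z (hz : h z < β) => hz.trans_le le_top).antisymm
    (affineSpan_le.2 fun y hy => ?_)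
  obtain ⟨a, hxa, haβ⟩ := EReal.lt_iff_exists_real_btwn.1 hx
  obtain ⟨b, hyb, -⟩ := EReal.lt_iff_exists_real_btwn.1 hy
  have hlim : Tendsto (fun s : ℝ => (((1 - s) * a + s * b : ℝ) : EReal)) (𝓝[>] 0) (𝓝 a) :=
    ((continuous_coe_real_ereal.comp (by fun_prop :
      Continuous fun s : ℝ => (1 - s) * a + s * b)).tendsto' 0 _ (by simp)).mono_left
        nhdsWithin_le_nhds
  obtain ⟨s, hsβ, hs0, hs1⟩ :=
    ((hlim.eventually_lt_const haβ).and (Ioo_mem_nhdsGT zero_lt_one)).exists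
  have hz : h (AffineMap.lineMap x y s) < β := by
    rw [AffineMap.lineMap_apply_module]
    exact lt_of_le_of_lt (hconv (x := (x, a)) hxa.le (y := (y, b)) hyb.le
      (sub_nonneg.2 hs1.le) hs0.le (sub_add_cancel 1 s)) hsβ
  have hy_eq : AffineMap.lineMap x (AffineMap.lineMap x y s) s⁻¹ = y := by
    simp [AffineMap.lineMap_apply, smul_smul, hs0.ne']
  rw [← hy_eq]
  exact AffineMap.lineMap_mem _ (subset_affineSpan ℝ _ hx) (subset_affineSpan ℝ _ hz)

variable {F : Type*} [NormedAddCommGroup F] [NormedSpace ℝ F] [FiniteDimensional ℝ F]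

lemma nonempty_inter_of_convex_of_subset_closure {s Q : Set F} (hs : Convex ℝ s)
    (hne : s.Nonempty) (hQ : Q ⊆ affineSpan ℝ s) (hsQ : s ⊆ closure Q) : (Q ∩ s).Nonempty := by
  obtain ⟨c, hc⟩ := (intrinsicInterior_nonempty hs).2 hne
  obtain ⟨c', hc', rfl⟩ := mem_intrinsicInterior.1 hc
  obtain ⟨U, hU, hU_eq⟩ := isOpen_induced_iff.1
    (isOpen_interior (s := ((↑) ⁻¹' s : Set (affineSpan ℝ s))))
  obtain ⟨q, hqU, hqQ⟩ := mem_closure_iff.1 (hsQ (intrinsicInterior_subset hc)) U hU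
    (by rwa [← hU_eq] at hc')
  have hq : (⟨q, hQ hqQ⟩ : affineSpan ℝ s) ∈ interior ((↑) ⁻¹' s : Set (affineSpan ℝ s)) := by
    rwa [← hU_eq]
  exact ⟨q, hqQ, (interior_subset hq :)⟩

lemma iInf_eq_iInf_of_dense_of_convex_epigraph {h : F → EReal}
    (hconv : Convex ℝ {p : F × ℝ | h p.1 ≤ (p.2 : EReal)}) {Q : Set F}
    (hQ : Q ⊆ closure {x | h x < ⊤}) (hdense : {x | h x < ⊤} ⊆ closure Q) :
    ⨅ x ∈ Q, h x = ⨅ x, h x := by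
  refine le_antisymm (le_iInf fun x => le_of_forall_gt fun β hx => ?_)
    (le_iInf₂ fun x _ => iInf_le _ x)
  have hQ_span : Q ⊆ affineSpan ℝ {x | h x < β} := by
    rw [affineSpan_setOf_lt_eq_affineSpan_setOf_lt_top hconv hx]
    exact hQ.trans (closure_minimal (subset_affineSpan ℝ _)
      (AffineSubspace.closed_of_finiteDimensional _))
  obtain ⟨q, hqQ, hqβ⟩ := nonempty_inter_of_convex_of_subset_closure
    (convex_setOf_lt_of_convex_epigraph hconv β) ⟨x, hx⟩ hQ_span
    fun z (hz : h z < β) => hdense (hz.trans_le le_top)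
  exact (iInf₂_le q hqQ).trans_lt hqβ

end ConvexFunctions

section LeftContinuous

variable {X Y : Type*} [LinearOrder X] [TopologicalSpace X] [TopologicalSpace Y] {s : Set X}

/-- Left-continuity relative to `s`. At `t ∈ s` only the values on `s ∩ Iic t` matter, so the
condition is void at the least element of `s`. -/
def IsLeftContinuousOn (y : X → Y) (s : Set X) : Prop :=
  ∀ t ∈ s, ContinuousWithinAt y (s ∩ Iic t) t

variable [OrderTopology X] [SecondCountableTopology X]

lemma exists_countable_cover_nhdsWithin_Iic {A : Set X} {u : X → Set X}
    (hu : ∀ t ∈ A, u t ∈ 𝓝[A ∩ Iic t] t) : ∃ I ⊆ A, I.Countable ∧ A ⊆ ⋃ t ∈ I, u t := by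
  choose! V hV_open hV_mem hVu using fun t ht => mem_nhdsWithin.1 (hu t ht)
  obtain ⟨I, hIA, hI, hI_eq⟩ := TopologicalSpace.isOpen_biUnion_countable A
    (fun t => V t ∩ Iio t) fun t ht => (hV_open t ht).inter isOpen_Iio
  let B : Set X := A \ ⋃ t ∈ A, V t ∩ Iio t
  have hB_countable : B.Countable := by
    suffices hisolated : ∀ t ∈ B, 𝓝[B ∩ Iio t] t = ⊥ from
      sep_eq_self_iff_mem_true.2 hisolated ▸ countable_setOfPred_isolated_left_within
    intro t ht
    rw [← empty_mem_iff_bot, mem_nhdsWithin]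
    refine ⟨V t, hV_open t ht.1, hV_mem t ht.1, fun r hr => ?_⟩
    exact hr.2.1.2 (mem_biUnion ht.1 ⟨hr.1, hr.2.2⟩)
  refine ⟨I ∪ B, union_subset hIA sdiff_subset, hI.union hB_countable, fun t ht => ?_⟩
  by_cases htB : t ∈ B
  · exact mem_biUnion (.inr htB) (hVu t ht ⟨hV_mem t ht, ht, self_mem_Iic⟩)
  · have ht_cover : t ∈ ⋃ r ∈ I, V r ∩ Iio r := by
      rw [hI_eq]
      exact not_not.1 fun h => htB ⟨ht, h⟩
    obtain ⟨r, hrI, htV, htr⟩ := mem_iUnion₂.1 ht_cover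
    exact mem_biUnion (.inl hrI) (hVu r (hIA hrI) ⟨htV, ht, le_of_lt htr⟩)

lemma exists_countable_forall_exists_apply_mem {D : Set (X → Y)}
    (hD : ∀ y ∈ D, IsLeftContinuousOn y s) {O : Set Y} (hO : IsOpen O) :
    ∃ C ⊆ D, C.Countable ∧ ∀ t ∈ s, (∃ y ∈ D, y t ∈ O) → ∃ y ∈ C, y t ∈ O := by
  rcases D.eq_empty_or_nonempty with rfl | ⟨y₀, -⟩
  · exact ⟨∅, subset_rfl, countable_empty, by simp⟩
  have : Nonempty (X → Y) := ⟨y₀⟩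
  choose! y hyD hyO using fun t (ht : ∃ y ∈ D, y t ∈ O) => ht
  obtain ⟨I, hIA, hI, hI_cover⟩ := exists_countable_cover_nhdsWithin_Iic
    (A := {t ∈ s | ∃ y ∈ D, y t ∈ O}) (u := fun t => y t ⁻¹' O) fun t ht =>
      nhdsWithin_mono t (inter_subset_inter_left _ (sep_subset _ _))
        ((hD _ (hyD t ht.2) t ht.1).preimage_mem_nhdsWithin (hO.mem_nhds (hyO t ht.2)))
  refine ⟨y '' I, image_subset_iff.2 fun t ht => hyD t (hIA ht).2, hI.image y, fun t ht hex => ?_⟩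
  obtain ⟨r, hrI, htr⟩ := mem_iUnion₂.1 (hI_cover ⟨ht, hex⟩)
  exact ⟨y r, mem_image_of_mem y hrI, htr⟩

lemma exists_countable_dense_evaluations [SecondCountableTopology Y] {D : Set (X → Y)}
    (hD : ∀ y ∈ D, IsLeftContinuousOn y s) :
    ∃ C ⊆ D, C.Countable ∧ ∀ t ∈ s, ∀ y ∈ D, y t ∈ closure ((fun z => z t) '' C) := by
  have hbasis := TopologicalSpace.isBasis_countableBasis Y
  choose! C hCD hC hC_hit using fun (O : Set Y) (hO : IsOpen O) =>
    exists_countable_forall_exists_apply_mem hD hO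
  refine ⟨⋃ O ∈ TopologicalSpace.countableBasis Y, C O,
    iUnion₂_subset fun O hO => hCD O (hbasis.isOpen hO),
    (TopologicalSpace.countable_countableBasis Y).biUnion fun O hO => hC O (hbasis.isOpen hO),
    fun t ht y hy => hbasis.mem_closure_iff.2 fun O hO hyO => ?_⟩
  obtain ⟨z, hzC, hzO⟩ := hC_hit O (hbasis.isOpen hO) t ht ⟨y, hy, hyO⟩
  exact ⟨z t, hzO, z, mem_biUnion hO hzC, rfl⟩

lemma IsLeftContinuousOn.measurable_domRestrict [MeasurableSpace X] [OpensMeasurableSpace X]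
    [MeasurableSpace Y] [BorelSpace Y] {y : X → Y} (hy : IsLeftContinuousOn y s) :
    Measurable (s.domRestrict y) := by
  refine measurable_of_isOpen fun O hO => ?_
  choose! V hV_open hV_mem hVO using fun t (ht : t ∈ s ∩ y ⁻¹' O) =>
    mem_nhdsWithin.1 ((hy t ht.1).preimage_mem_nhdsWithin (hO.mem_nhds ht.2))
  obtain ⟨I, hIA, hI, hI_cover⟩ := exists_countable_cover_nhdsWithin_Iic
    (A := s ∩ y ⁻¹' O) (u := fun t => V t ∩ Iic t) fun t ht =>
      inter_mem (mem_nhdsWithin_of_mem_nhds ((hV_open t ht).mem_nhds (hV_mem t ht)))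
        (mem_of_superset self_mem_nhdsWithin inter_subset_right)
  have hpreimage : s.domRestrict y ⁻¹' O = (↑) ⁻¹' ⋃ t ∈ I, V t ∩ Iic t := by
    ext t
    refine ⟨fun ht => hI_cover ⟨t.2, ht⟩, fun ht => ?_⟩
    obtain ⟨r, hrI, htV, htr⟩ := mem_iUnion₂.1 ht
    exact hVO r (hIA hrI) ⟨htV, t.2, htr⟩
  rw [hpreimage]
  exact measurable_subtype_coe (.biUnion hI fun t ht =>
    (hV_open t (hIA ht)).measurableSet.inter measurableSet_Iic)

end LeftContinuous

section NormalIntegrand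

variable {α X : Type*} [MeasurableSpace α] [EMetricSpace X] [SecondCountableTopology X]
  [MeasurableSpace X] [BorelSpace X]

lemma measurableSet_setOf_mem_of_isClosed {E : α → Set X} (hclosed : ∀ t, IsClosed (E t))
    (hE : ∀ O, IsOpen O → MeasurableSet {t | ∃ p ∈ O, p ∈ E t}) {f : α → X} (hf : Measurable f) :
    MeasurableSet {t | f t ∈ E t} := by
  have hdist : Measurable (Function.uncurry fun x t => Metric.infEDist x (E t)) := by
    refine measurable_uncurry_of_continuous_of_measurable
      (fun _ => Metric.continuous_infEDist) fun x => measurable_of_Iio fun r => ?_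
    convert hE (Metric.eball x r) Metric.isOpen_eball using 1
    ext t
    simp only [mem_preimage, mem_Iio, Metric.infEDist_lt_iff, mem_ofPred_eq, Metric.mem_eball']
    exact exists_congr fun p => and_comm
  have hzero : {t | f t ∈ E t} = {t | Metric.infEDist (f t) (E t) = 0} := by
    ext t
    rw [mem_ofPred_eq, mem_ofPred_eq, ← Metric.mem_closure_iff_infEDist_zero,
      (hclosed t).closure_eq]
  rw [hzero]
  exact hdist.comp (hf.prodMk measurable_id) (measurableSet_singleton 0)

lemma measurable_of_measurableSet_le_coe {f : α → EReal}
    (hf : ∀ r : ℝ, MeasurableSet {t | f t ≤ r}) : Measurable f := by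
  refine measurable_of_Iio fun c => ?_
  have hIio : f ⁻¹' Iio c = ⋃ q ∈ {q : ℚ | ((q : ℝ) : EReal) < c}, {t | f t ≤ (q : ℝ)} := by
    ext t
    simp only [mem_preimage, mem_Iio, mem_iUnion, mem_ofPred_eq, exists_prop]
    refine ⟨fun ht => ?_, fun ⟨q, hq, ht⟩ => ht.trans_lt hq⟩
    obtain ⟨q, htq, hq⟩ := EReal.lt_iff_exists_rat_btwn.1 ht
    exact ⟨q, hq, htq.le⟩
  rw [hIio]
  exact .biUnion (to_countable _) fun q _ => hf q

lemma measurable_apply_of_isClosed_epigraph {h : α → X → EReal}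
    (hclosed : ∀ t, IsClosed {p : X × ℝ | h t p.1 ≤ (p.2 : EReal)})
    (hmeas : ∀ O : Set (X × ℝ), IsOpen O → MeasurableSet {t | ∃ p ∈ O, h t p.1 ≤ (p.2 : EReal)})
    {y : α → X} (hy : Measurable y) : Measurable fun t => h t (y t) :=
  measurable_of_measurableSet_le_coe fun r =>
    measurableSet_setOf_mem_of_isClosed hclosed hmeas (hy.prodMk (measurable_const (a := r)))

lemma IsConvexNormalIntegrand.aemeasurable_apply {d : ℕ} {T : ℝ} {μ : Measure ℝ}
    {h : ℝ → Euc d → EReal} (hh : IsConvexNormalIntegrand T h) (hμ : μ (Icc 0 T)ᶜ = 0)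
    {y : ℝ → Euc d} (hy : IsLeftContinuousOn y (Icc 0 T)) :
    AEMeasurable (fun t => h t (y t)) μ := by
  have hdomRestrict : Measurable ((Icc 0 T).domRestrict fun t => h t (y t)) := by
    refine measurable_apply_of_isClosed_epigraph (h := fun t : Icc 0 T => h t)
      (fun t => (hh.1 t t.2).1) (fun O hO => ?_) hy.measurable_domRestrict
    convert measurable_subtype_coe (hh.2 O hO) using 1
    ext t
    exact ⟨fun ht => ⟨t.2, ht⟩, And.right⟩
  rw [← Measure.restrict_eq_self_of_ae_mem (s := Icc 0 T) hμ]
  exact aemeasurable_restrict_of_measurable_subtype measurableSet_Icc hdomRestrict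

end NormalIntegrand

section IocNeighborhoods

variable {X : Type*} [LinearOrder X] [TopologicalSpace X] [OrderClosedTopology X]

lemma eventually_nhdsLT_mem_Ioc_iff (a b t : X) :
    ∀ᶠ r in 𝓝[<] t, r ∈ Ioc a b ↔ t ∈ Ioc a b := by
  rcases le_or_gt t a with hta | hat
  · filter_upwards [self_mem_nhdsWithin] with r hr
    exact iff_of_false (fun h => (h.1.trans hr).not_ge hta) fun h => h.1.not_ge hta
  rcases le_or_gt t b with htb | hbt
  · filter_upwards [Ioo_mem_nhdsLT hat] with r hr
    exact iff_of_true ⟨hr.1, hr.2.le.trans htb⟩ ⟨hat, htb⟩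
  · filter_upwards [Ioo_mem_nhdsLT hbt] with r hr
    exact iff_of_false (fun h => hr.1.not_ge h.2) fun h => hbt.not_ge h.2

lemma eventually_nhdsGT_mem_or_eventually_notMem_Ioc (a b t : X) :
    (∀ᶠ r in 𝓝[>] t, r ∈ Ioc a b) ∨ ∀ᶠ r in 𝓝[>] t, r ∉ Ioc a b := by
  rcases lt_or_ge t a with hta | hat
  · refine .inr ?_
    filter_upwards [Ioo_mem_nhdsGT hta] with r hr using fun h => hr.2.not_gt h.1
  rcases lt_or_ge t b with htb | hbt
  · refine .inl ?_
    filter_upwards [Ioo_mem_nhdsGT htb] with r hr using ⟨hat.trans_lt hr.1, hr.2.le⟩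
  · refine .inr ?_
    filter_upwards [self_mem_nhdsWithin] with r hr using fun h => (hbt.trans_lt hr).not_ge h.2

end IocNeighborhoods

section CagladSelections

variable {d : ℕ} {T : ℝ}

/-- The càglàd selections of a set-valued map `S`: the paper's `D_l(S)`. -/
def cagladSelections (T : ℝ) (S : ℝ → Set (Euc d)) : Set (ℝ → Euc d) :=
  {y | IsCagladOn T y ∧ ∀ t ∈ Icc 0 T, y t ∈ S t}

lemma IsCagladOn.isLeftContinuousOn {y : ℝ → Euc d} (hy : IsCagladOn T y) :
    IsLeftContinuousOn y (Icc 0 T) := by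
  intro t ht
  rcases ht.1.eq_or_lt with rfl | ht0
  · refine continuousWithinAt_singleton.mono fun r hr => ?_
    exact le_antisymm hr.2 hr.1.1
  · exact (continuousWithinAt_Iio_iff_Iic.1 (hy.1 t ⟨ht0, ht.2⟩)).mono inter_subset_right

lemma IsCagladOn.piecewise {y z : ℝ → Euc d} (hy : IsCagladOn T y) (hz : IsCagladOn T z)
    {A : Set ℝ} (hleft : ∀ t, ∀ᶠ r in 𝓝[<] t, r ∈ A ↔ t ∈ A)
    (hright : ∀ t, (∀ᶠ r in 𝓝[>] t, r ∈ A) ∨ ∀ᶠ r in 𝓝[>] t, r ∉ A) :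
    IsCagladOn T (A.piecewise y z) := by
  refine ⟨fun t ht => ?_, fun t ht => ?_⟩
  · by_cases htA : t ∈ A
    · rw [piecewise_eq_of_mem _ _ _ htA]
      exact (hy.1 t ht).congr' <| (hleft t).mono fun r hr =>
        (piecewise_eq_of_mem _ _ _ (hr.2 htA)).symm
    · rw [piecewise_eq_of_notMem _ _ _ htA]
      exact (hz.1 t ht).congr' <| (hleft t).mono fun r hr =>
        (piecewise_eq_of_notMem _ _ _ (mt hr.1 htA)).symm
  · rcases hright t with hmem | hnotMem
    · exact (hy.2 t ht).imp fun l hl => hl.congr' <| hmem.mono fun r hr =>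
        (piecewise_eq_of_mem _ _ _ hr).symm
    · exact (hz.2 t ht).imp fun l hl => hl.congr' <| hnotMem.mono fun r hr =>
        (piecewise_eq_of_notMem _ _ _ hr).symm

lemma mem_pastingSets_cagladSelections {A : Set ℝ} (hA : MeasurableSet A)
    (hleft : ∀ t, ∀ᶠ r in 𝓝[<] t, r ∈ A ↔ t ∈ A)
    (hright : ∀ t, (∀ᶠ r in 𝓝[>] t, r ∈ A) ∨ ∀ᶠ r in 𝓝[>] t, r ∉ A) (S : ℝ → Set (Euc d)) :
    A ∈ pastingSets (cagladSelections T S) :=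
  ⟨hA, fun _ hy _ hz => ⟨hy.1.piecewise hz.1 hleft hright, piecewise_mem_pi A hy.2 hz.2⟩⟩

lemma isDecomposable_cagladSelections (S : ℝ → Set (Euc d)) :
    IsDecomposable (cagladSelections T S) := by
  refine (BorelSpace.measurable_eq.trans (borel_eq_generateFrom_Ioc ℝ)).trans_le
    (MeasurableSpace.generateFrom_mono ?_)
  rintro _ ⟨a, b, -, rfl⟩
  exact mem_pastingSets_cagladSelections measurableSet_Ioc (eventually_nhdsLT_mem_Ioc_iff a b)
    (eventually_nhdsGT_mem_or_eventually_notMem_Ioc a b) S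

end CagladSelections

lemma closure_apply_image_subset_of_forall_exists_dist_le {X Y : Type*} [PseudoMetricSpace Y]
    {D D' : Set (X → Y)} {s : Set X}
    (happrox : ∀ y ∈ D, ∀ ε > (0 : ℝ), ∃ z ∈ D', ∀ t ∈ s, dist (z t) (y t) ≤ ε) {t : X}
    (ht : t ∈ s) : closure ((fun y => y t) '' D) ⊆ closure ((fun z => z t) '' D') := by
  refine closure_minimal (image_subset_iff.2 fun y hy => ?_) isClosed_closure
  refine Metric.mem_closure_iff.2 fun ε hε => ?_
  obtain ⟨z, hzD', hz⟩ := happrox y hy (ε / 2) (half_pos hε)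
  refine ⟨z t, mem_image_of_mem _ hzD', ?_⟩
  rw [dist_comm]
  exact (hz t ht).trans_lt (half_lt_self hε)

theorem statement3_general {d : ℕ} {T : ℝ} {μ : Measure ℝ} [IsFiniteMeasure μ]
    (hμ : μ (Icc 0 T)ᶜ = 0) {h : ℝ → Euc d → EReal} (hh : IsConvexNormalIntegrand T h)
    {D : Set (ℝ → Euc d)} (hD : IsDecomposable D)
    (hleft : ∀ y ∈ D, IsLeftContinuousOn y (Icc 0 T))
    (hdom : ∀ y ∈ D, ∀ t ∈ Icc 0 T, y t ∈ closure {x | h t x < ⊤})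
    (hdense : ∀ t ∈ Icc 0 T, {x | h t x < ⊤} ⊆
      closure ((fun y => y t) '' {y ∈ D | eIntegral μ (fun t => h t (y t)) < ⊤}))
    (hfin : (⨅ y ∈ D, eIntegral μ fun t => h t (y t)) < ⊤) :
    (⨅ y ∈ D, eIntegral μ fun t => h t (y t)) = eIntegral μ fun t => ⨅ x, h t x := by
  set domI : Set (ℝ → Euc d) := {y ∈ D | eIntegral μ (fun t => h t (y t)) < ⊤}
  obtain ⟨C, hCD, hC, hC_dense⟩ :=
    exists_countable_dense_evaluations (D := domI) fun y hy => hleft y hy.1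
  obtain ⟨y₀, hy₀⟩ : ∃ y₀, y₀ ∈ domI := by
    simpa only [domI, mem_sep_iff, iInf_lt_iff, exists_prop] using hfin
  obtain ⟨z, hz_eq⟩ := (hC.insert y₀).exists_eq_range (insert_nonempty y₀ C)
  have hz (n : ℕ) : z n ∈ domI := insert_subset hy₀ hCD (hz_eq ▸ mem_range_self n)
  refine hD.iInf_eIntegral (fun y hy => hh.aemeasurable_apply hμ (hleft y hy))
    (fun n => (hz n).1) (fun n => (hz n).2) ?_
  have hmem : ∀ᵐ t ∂μ, t ∈ Icc 0 T := hμ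
  filter_upwards [hmem] with t ht
  rw [← iInf_range (g := h t) (f := fun n => z n t)]
  refine (iInf_eq_iInf_of_dense_of_convex_epigraph (hh.1 t ht).2
    (range_subset_iff.2 fun n => hdom _ (hz n).1 t ht) ?_).symm
  have hC_range : (fun y => y t) '' C ⊆ range fun n => z n t := by
    rw [range_comp' (fun y => y t) z, ← hz_eq]
    exact image_mono (subset_insert y₀ C)
  exact (hdense t ht).trans (closure_minimal
    (image_subset_iff.2 fun y hy => closure_mono hC_range (hC_dense t ht y hy)) isClosed_closure)

/-- **Interchange rule on the space of càglàd functions** (Theorem 3.5): under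
Assumption 3.4 (`S̃_t = cl{y_t | y ∈ D_l(S̃)}` and `D_l(S̃) = cl(dom I_h̃ ∩ D_l(S̃))` in
the supremum norm), `inf_{y ∈ D_l(S̃)} I_h̃(y) = ∫ inf_{x∈ℝ^d} h̃_t(x) dμ̃(t)` as soon as
the left side is `< +∞`. -/
theorem statement3 {d : ℕ} (T : ℝ) (hT : 0 < T)
    (μ : Measure ℝ) [IsFiniteMeasure μ] (hμc : μ (Set.Icc (0:ℝ) T)ᶜ = 0)
    (h : ℝ → Euc d → EReal) (hh : IsConvexNormalIntegrand T h)
    (DS : Set (ℝ → Euc d))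
    (hDS : DS = {y | IsCagladOn T y ∧
      ∀ t ∈ Set.Icc (0:ℝ) T, y t ∈ closure {x | h t x < ⊤}})
    -- Assumption 3.2 (i): `S_t = cl{y_t | y ∈ D(S)}` for all `t`
    (hS : ∀ t ∈ Set.Icc (0:ℝ) T,
      closure {x | h t x < ⊤} = closure {v | ∃ y ∈ DS, y t = v})
    -- Assumption 3.2 (ii): `D(S) = cl(dom I_h ∩ D(S))`, closure in the supremum norm
    (hcl : ∀ y : ℝ → Euc d, IsCagladOn T y →
      (y ∈ DS ↔ ∀ ε > (0:ℝ), ∃ z ∈ DS, eIntegral μ (fun t => h t (z t)) < ⊤ ∧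
        ∀ t ∈ Set.Icc (0:ℝ) T, dist (z t) (y t) ≤ ε))
    (hfin : (⨅ y ∈ DS, eIntegral μ fun t => h t (y t)) < ⊤) :
    (⨅ y ∈ DS, eIntegral μ fun t => h t (y t)) = eIntegral μ fun t => ⨅ x : Euc d, h t x := by
  subst hDS
  exact statement3_general hμc hh (isDecomposable_cagladSelections _)
    (fun y hy => hy.1.isLeftContinuousOn) (fun y hy => hy.2) (fun t ht => subset_closure.trans <|
      (hS t ht).trans_subset <| closure_apply_image_subset_of_forall_exists_dist_le
        (fun y hy ε hε => by simpa only [mem_sep_iff, and_assoc] using (hcl y hy.1).1 hy ε hε) ht)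
    hfin
end

section
/- Let (Ω,F,P) be a complete probability space, T > 0 finite, and Γ : Ω × [0,T] ⇒ ℝ^d an F ⊗ B([0,T])-measurable set-valued mapping with closed convex values. Then the set-valued mapping C(Γ) : Ω ⇒ C([0,T];ℝ^d) defined by C(Γ)(ω) := {y ∈ C([0,T];ℝ^d) | y_t ∈ Γ_t(ω) for all t} has closed convex values (with respect to the supremum norm) and is measurable: {ω | C(Γ)(ω) ∩ O ≠ ∅} ∈ F for every open O ⊆ C([0,T];ℝ^d). -/
open MeasureTheory Filter Set Topology
open scoped ENNReal Classical

/-!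
A continuous function `y` is a selection of a closed-valued `Γ` iff its defect
`⨆ t, infEDist (y t) (Γ t)` vanishes. The defect is continuous in `y`; for fixed `y` it is
measurable in `ω`, because the superlevel sets of a supremum over `t` are projections of measurable
subsets of `Ω × I`. Being continuous in one variable and measurable in the other, the defect is
jointly measurable, so the continuous selections have a measurable graph, and projecting this graph
shows that they form a measurable set-valued map.

Both projections are measurable since the measure is complete: a measurable subset of `Ω × Y` is
the preimage of a Borel set under some `φ × id` with values in a standard Borel space, and the
analytic projection of that Borel set is approximated from inside by compact sets.
-/

section Analytic

variable {X : Type*} [MeasurableSpace X] {μ : Measure X} {c : ℝ≥0∞}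

lemma exists_lt_measure_image_inter_le {α : Type*} (f : α → X) (g : α → ℕ) {A : Set α}
    (hc : c < μ (f '' A)) : ∃ m, c < μ (f '' (A ∩ {a | g a ≤ m})) := by
  have hA : A = ⋃ m, A ∩ {a | g a ≤ m} := by
    rw [← inter_iUnion, iUnion_eq_univ_iff.2 fun a => ⟨g a, le_refl (g a)⟩, inter_univ]
  have hmono : Monotone fun m => f '' (A ∩ {a | g a ≤ m}) := fun _ _ hmn =>
    image_mono (inter_subset_inter_right A fun _ ha => le_trans ha hmn)
  rw [hA, image_iUnion, hmono.measure_iUnion] at hc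
  exact lt_iSup_iff.1 hc

lemma exists_forall_lt_measure_image_prefix_le {f : (ℕ → ℕ) → X} (hc : c < μ (range f)) :
    ∃ n : ℕ → ℕ, ∀ k, c < μ (f '' {x | ∀ i < k, x i ≤ n i}) := by
  choose! m hm using fun (A : Set (ℕ → ℕ)) (k : ℕ) (hA : c < μ (f '' A)) =>
    exists_lt_measure_image_inter_le f (fun x => x k) hA
  let A : ℕ → Set (ℕ → ℕ) := fun k =>
    Nat.rec univ (fun k B => B ∩ {x | x k ≤ m B k}) k
  have hA : ∀ k, A k = {x | ∀ i < k, x i ≤ m (A i) i} := by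
    intro k
    induction k with
    | zero => simp [A]
    | succ k ih =>
      calc A (k + 1) = A k ∩ {x | x k ≤ m (A k) k} := rfl
        _ = {x | ∀ i < k + 1, x i ≤ m (A i) i} := by
          ext x
          simp only [Nat.forall_lt_succ_right, mem_inter_iff, mem_ofPred_eq]
          exact and_congr_left fun _ => Set.ext_iff.1 ih x
  have hlt : ∀ k, c < μ (f '' A k) := by
    intro k
    induction k with
    | zero => simpa [A] using hc
    | succ k ih => exact hm (A k) k ih
  exact ⟨fun i => m (A i) i, fun k => hA k ▸ hlt k⟩

lemma isCompact_Iic_nat_pi (n : ℕ → ℕ) : IsCompact (Iic n) := by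
  rw [← pi_univ_Iic]
  exact isCompact_univ_pi fun i => (finite_Iic (n i)).isCompact

lemma exists_prefix_le_subset_of_Iic_subset {n : ℕ → ℕ} {V : Set (ℕ → ℕ)} (hV : IsOpen V)
    (hnV : Iic n ⊆ V) : ∃ k, {x : ℕ → ℕ | ∀ i < k, x i ≤ n i} ⊆ V := by
  let : MetricSpace (ℕ → ℕ) := PiNat.metricSpaceNatNat
  obtain ⟨δ, hδ, hδV⟩ := (isCompact_Iic_nat_pi n).exists_thickening_subset_open hV hnV
  obtain ⟨k, hk⟩ := exists_pow_lt_of_lt_one hδ (one_half_lt_one (α := ℝ))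
  refine ⟨k, fun x hx => hδV (Metric.mem_thickening_iff.2 ⟨x ⊓ n, mem_Iic.2 inf_le_right, ?_⟩)⟩
  have hcyl : x ∈ PiNat.cylinder (x ⊓ n) k := fun i hi => (min_eq_left (hx i hi)).symm
  exact (PiNat.mem_cylinder_iff_dist_le.1 hcyl).trans_lt hk

variable [TopologicalSpace X] [μ.OuterRegular] {S : Set X}

lemma exists_isCompact_subset_le_measure_of_analyticSet (hS : AnalyticSet S) (hc : c < μ S) :
    ∃ K ⊆ S, IsCompact K ∧ c ≤ μ K := by
  rw [AnalyticSet] at hS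
  rcases hS with rfl | ⟨f, hf, rfl⟩
  · simp at hc
  obtain ⟨n, hn⟩ := exists_forall_lt_measure_image_prefix_le hc
  refine ⟨f '' Iic n, image_subset_range f _, (isCompact_Iic_nat_pi n).image hf, ?_⟩
  rw [Set.measure_eq_iInf_isOpen]
  refine le_iInf₂ fun U hU => le_iInf fun hUo => ?_
  obtain ⟨k, hk⟩ :=
    exists_prefix_le_subset_of_Iic_subset (hUo.preimage hf) (image_subset_iff.1 hU)
  exact (hn k).le.trans (measure_mono (image_subset_iff.2 hk))

lemma nullMeasurableSet_of_analyticSet_of_outerRegular [T2Space X] [OpensMeasurableSpace X]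
    [IsFiniteMeasure μ] (hS : AnalyticSet S) : NullMeasurableSet S μ := by
  by_cases h0 : μ S = 0
  · exact .of_null h0
  obtain ⟨u, -, hu, hlim⟩ := exists_seq_strictMono_tendsto' (pos_iff_ne_zero.2 h0)
  choose K hKS hK huK using fun i =>
    exists_isCompact_subset_le_measure_of_analyticSet hS (hu i).2
  have hmeas : NullMeasurableSet (⋃ i, K i) μ :=
    (MeasurableSet.iUnion fun i => (hK i).measurableSet).nullMeasurableSet
  have hle : μ S ≤ μ (⋃ i, K i) :=
    le_of_tendsto' hlim fun i => (huK i).trans (measure_mono (subset_iUnion K i))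
  exact hmeas.congr
    (ae_eq_of_subset_of_measure_ge (iUnion_subset hKS) hle hmeas (measure_ne_top _ _))

end Analytic

lemma nullMeasurableSet_of_analyticSet {X : Type*} [TopologicalSpace X] [PolishSpace X]
    [MeasurableSpace X] [BorelSpace X] {μ : Measure X} [SFinite μ] {S : Set X}
    (hS : AnalyticSet S) : NullMeasurableSet S μ :=
  (nullMeasurableSet_of_analyticSet_of_outerRegular (μ := μ.toFinite) hS).mono_ac
    (absolutelyContinuous_toFinite μ)

section Projection

variable {Ω Y : Type*} [MeasurableSpace Ω] [MeasurableSpace Y]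

lemma exists_standardBorelSpace_preimage_prodMap_eq {A : Set (Ω × Y)} (hA : MeasurableSet A) :
    ∃ (X : Type) (_ : MeasurableSpace X) (_ : StandardBorelSpace X) (φ : Ω → X)
      (B : Set (X × Y)), Measurable φ ∧ MeasurableSet B ∧ Prod.map φ id ⁻¹' B = A := by
  induction A, hA using MeasurableSpace.induction_on_inter generateFrom_prod.symm
    isPiSystem_prod with
  | empty =>
    exact ⟨Unit, inferInstance, inferInstance, fun _ => (), ∅, measurable_const, .empty, rfl⟩
  | basic s hs =>
    obtain ⟨a, ha, b, hb, rfl⟩ := hs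
    refine ⟨Prop, inferInstance, inferInstance, (· ∈ a), {True} ×ˢ b, measurable_mem.2 ha,
      (measurableSet_singleton True).prod hb, ?_⟩
    ext p
    simp
  | compl s _ ih =>
    obtain ⟨X, _, _, φ, B, hφ, hB, rfl⟩ := ih
    exact ⟨X, _, inferInstance, φ, Bᶜ, hφ, hB.compl, rfl⟩
  | iUnion s _ _ ih =>
    choose X _ _ φ B hφ hB hs using ih
    refine ⟨∀ n, X n, inferInstance, inferInstance, fun ω n => φ n ω,
      ⋃ n, Prod.map (fun x => x n) id ⁻¹' B n, measurable_pi_iff.2 hφ,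
      .iUnion fun n => ((measurable_pi_apply n).prodMap measurable_id) (hB n), ?_⟩
    simp only [preimage_iUnion, ← hs]
    rfl

lemma measurableSet_image_fst_of_isComplete [StandardBorelSpace Y] (P : Measure Ω) [SFinite P]
    [P.IsComplete] {A : Set (Ω × Y)} (hA : MeasurableSet A) : MeasurableSet (Prod.fst '' A) := by
  obtain ⟨X, _, _, φ, B, hφ, hB, rfl⟩ := exists_standardBorelSpace_preimage_prodMap_eq hA
  let := upgradeStandardBorel X
  have hnull : NullMeasurableSet (Prod.fst '' B) (P.map φ) :=
    nullMeasurableSet_of_analyticSet (hB.analyticSet_image measurable_fst)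
  have hpre : Prod.fst '' (Prod.map φ id ⁻¹' B) = φ ⁻¹' (Prod.fst '' B) := by
    ext ω
    simp
  rw [hpre]
  exact (hnull.preimage (hφ.quasiMeasurePreserving P)).measurable_of_complete

lemma measurable_iSup_of_isComplete [StandardBorelSpace Y] (P : Measure Ω) [SFinite P]
    [P.IsComplete] {β : Type*} [CompleteLinearOrder β] [TopologicalSpace β] [OrderTopology β]
    [SecondCountableTopology β] [MeasurableSpace β] [BorelSpace β] {f : Ω → Y → β}
    (hf : Measurable (Function.uncurry f)) : Measurable fun ω => ⨆ y, f ω y := by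
  refine measurable_of_Ioi fun c => ?_
  convert measurableSet_image_fst_of_isComplete P (hf (measurableSet_Ioi (a := c))) using 1
  ext ω
  simp [lt_iSup_iff]

end Projection

/-- Measurability of a set-valued map `Γ : α ⇒ E` in the sense of Effros: the preimage
`{a | Γ a ∩ O ≠ ∅}` of every open set `O` is measurable. -/
def MeasurableSetValued {α E : Type*} [MeasurableSpace α] [TopologicalSpace E]
    (Γ : α → Set E) : Prop :=
  ∀ O : Set E, IsOpen O → MeasurableSet {a | (Γ a ∩ O).Nonempty}

namespace MeasurableSetValued

variable {α E : Type*} [MeasurableSpace α]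

lemma restrict_snd {ι : Type*} [MeasurableSpace ι] [TopologicalSpace E] {Γ : α → ι → Set E}
    {J : Set ι} (hΓ : ∀ O : Set E, IsOpen O →
      MeasurableSet {p : α × ι | p.2 ∈ J ∧ (Γ p.1 p.2 ∩ O).Nonempty}) :
    MeasurableSetValued fun p : α × J => Γ p.1 p.2 := by
  intro O hO
  simpa [preimage_ofPred_eq] using
    (measurable_id.prodMap measurable_subtype_coe : Measurable (Prod.map id ((↑) : J → ι)))
      (hΓ O hO)

lemma measurable_infEDist_const [PseudoEMetricSpace E] {Γ : α → Set E}
    (hΓ : MeasurableSetValued Γ) (x : E) : Measurable fun a => Metric.infEDist x (Γ a) := by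
  refine measurable_of_Iio fun r => ?_
  convert hΓ _ (Metric.isOpen_eball (x := x) (ε := r)) using 1
  ext a
  simp [Metric.infEDist_lt_iff, Set.Nonempty, edist_comm]

lemma measurable_infEDist [EMetricSpace E] [SecondCountableTopology E] [MeasurableSpace E]
    [OpensMeasurableSpace E] {Γ : α → Set E} (hΓ : MeasurableSetValued Γ) {f : α → E}
    (hf : Measurable f) : Measurable fun a => Metric.infEDist (f a) (Γ a) :=
  (measurable_uncurry_of_continuous_of_measurable
    (fun _ => Metric.continuous_infEDist) hΓ.measurable_infEDist_const).comp
      (hf.prodMk measurable_id)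

end MeasurableSetValued

/-- The continuous selections of a set-valued map `Γ : I ⇒ E`, written `C(Γ)` in the literature. -/
def continuousSelections {I E : Type*} [TopologicalSpace I] [TopologicalSpace E]
    (Γ : I → Set E) : Set C(I, E) :=
  {y | ∀ t, y t ∈ Γ t}

lemma isClosed_continuousSelections {I E : Type*} [TopologicalSpace I] [TopologicalSpace E]
    {Γ : I → Set E} (hΓ : ∀ t, IsClosed (Γ t)) : IsClosed (continuousSelections Γ) := by
  rw [continuousSelections, ofPred_forall]
  exact isClosed_iInter fun t => (hΓ t).preimage (continuous_eval_const t)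

lemma convex_continuousSelections {I 𝕜 E : Type*} [TopologicalSpace I] [Semiring 𝕜]
    [PartialOrder 𝕜] [TopologicalSpace E] [AddCommMonoid E] [ContinuousAdd E] [Module 𝕜 E]
    [ContinuousConstSMul 𝕜 E] {Γ : I → Set E} (hΓ : ∀ t, Convex 𝕜 (Γ t)) :
    Convex 𝕜 (continuousSelections Γ) :=
  fun _ hx _ hy _ _ ha hb hab t => hΓ t (hx t) (hy t) ha hb hab

/-- The supremal distance from `y t` to `Γ t`, which measures how far `y` is from being a selection
of `Γ`. It is `∞` as soon as some `Γ t` is empty. -/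
noncomputable def selectionDefect {I E : Type*} [TopologicalSpace I] [PseudoEMetricSpace E]
    (Γ : I → Set E) (y : C(I, E)) : ℝ≥0∞ :=
  ⨆ t, Metric.infEDist (y t) (Γ t)

lemma selectionDefect_eq_zero_iff {I E : Type*} [TopologicalSpace I] [PseudoEMetricSpace E]
    {Γ : I → Set E} (hΓ : ∀ t, IsClosed (Γ t)) {y : C(I, E)} :
    selectionDefect Γ y = 0 ↔ y ∈ continuousSelections Γ := by
  simp only [selectionDefect, ENNReal.iSup_eq_zero, continuousSelections, mem_ofPred_eq,
    Metric.mem_iff_infEDist_zero_of_closed (hΓ _)]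

lemma continuous_selectionDefect {I E : Type*} [TopologicalSpace I] [CompactSpace I]
    [PseudoMetricSpace E] (Γ : I → Set E) : Continuous (selectionDefect Γ) := by
  refine continuous_of_le_add_edist 1 ENNReal.one_ne_top fun y z => iSup_le fun t => ?_
  calc Metric.infEDist (y t) (Γ t)
      ≤ Metric.infEDist (z t) (Γ t) + edist (y t) (z t) := Metric.infEDist_le_infEDist_add_edist
    _ ≤ selectionDefect Γ z + edist y z := by
      rw [ContinuousMap.edist_eq_iSup]
      exact add_le_add (le_iSup (fun t => Metric.infEDist (z t) (Γ t)) t)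
        (le_iSup (fun t => edist (y t) (z t)) t)
    _ = selectionDefect Γ z + 1 * edist y z := by rw [one_mul]

section MeasurableSelections

variable {Ω I E : Type*} [MeasurableSpace Ω] [TopologicalSpace I] [PolishSpace I]
  [MeasurableSpace I] [BorelSpace I]

lemma MeasurableSetValued.measurable_selectionDefect [EMetricSpace E] [SecondCountableTopology E]
    (P : Measure Ω) [SFinite P] [P.IsComplete] {Γ : Ω → I → Set E}
    (hΓ : MeasurableSetValued fun p : Ω × I => Γ p.1 p.2) (y : C(I, E)) :
    Measurable fun ω => selectionDefect (Γ ω) y := by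
  borelize E
  exact measurable_iSup_of_isComplete P
    (hΓ.measurable_infEDist (y.continuous.measurable.comp measurable_snd))

lemma measurableSet_setOf_mem_continuousSelections [CompactSpace I] [MetricSpace E]
    [SecondCountableTopology E] [MeasurableSpace C(I, E)] [BorelSpace C(I, E)] (P : Measure Ω)
    [SFinite P] [P.IsComplete] {Γ : Ω → I → Set E} (hclosed : ∀ ω t, IsClosed (Γ ω t))
    (hΓ : MeasurableSetValued fun p : Ω × I => Γ p.1 p.2) :
    MeasurableSet {p : Ω × C(I, E) | p.2 ∈ continuousSelections (Γ p.1)} := by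
  have hdefect : Measurable (Function.uncurry fun (y : C(I, E)) ω => selectionDefect (Γ ω) y) :=
    measurable_uncurry_of_continuous_of_measurable
      (fun ω => continuous_selectionDefect (Γ ω)) (hΓ.measurable_selectionDefect P)
  simp_rw [← selectionDefect_eq_zero_iff (hclosed _)]
  exact (hdefect.comp measurable_swap) (measurableSet_singleton 0)

lemma measurableSetValued_continuousSelections [CompactSpace I] [MetricSpace E] [CompleteSpace E]
    [SecondCountableTopology E] (P : Measure Ω) [SFinite P] [P.IsComplete] {Γ : Ω → I → Set E}
    (hclosed : ∀ ω t, IsClosed (Γ ω t)) (hΓ : MeasurableSetValued fun p : Ω × I => Γ p.1 p.2) :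
    MeasurableSetValued fun ω => continuousSelections (Γ ω) := by
  intro O hO
  borelize C(I, E)
  have hgraph := measurableSet_setOf_mem_continuousSelections P hclosed hΓ
  convert measurableSet_image_fst_of_isComplete P (hgraph.inter (measurable_snd hO.measurableSet))
    using 1
  ext ω
  simp [Set.Nonempty]

theorem statement8_general [CompactSpace I] [NormedAddCommGroup E] [NormedSpace ℝ E]
    [CompleteSpace E] [SecondCountableTopology E] (P : Measure Ω) [SFinite P] [P.IsComplete]
    {Γ : Ω → I → Set E} (hclosed : ∀ ω t, IsClosed (Γ ω t))
    (hΓ : MeasurableSetValued fun p : Ω × I => Γ p.1 p.2) :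
    (∀ ω, IsClosed (continuousSelections (Γ ω)) ∧
      ((∀ t, Convex ℝ (Γ ω t)) → Convex ℝ (continuousSelections (Γ ω)))) ∧
    MeasurableSetValued fun ω => continuousSelections (Γ ω) :=
  ⟨fun ω => ⟨isClosed_continuousSelections (hclosed ω), convex_continuousSelections⟩,
    measurableSetValued_continuousSelections P hclosed hΓ⟩

end MeasurableSelections

/-- **Measurability of the continuous selections mapping** (Corollary 4.4): for a
complete probability space `(Ω,F,P)` and an `F ⊗ B([0,T])`-measurable closed
convex-valued mapping `Γ : Ω × [0,T] ⇒ ℝ^d`, the mapping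
`C(Γ)(ω) = {y ∈ C([0,T];ℝ^d) | y_t ∈ Γ_t(ω) ∀t}` is closed convex-valued and
measurable. -/
theorem statement8 {Ω : Type*} [mΩ : MeasurableSpace Ω] {d : ℕ} (T : ℝ) (hT : 0 < T)
    (P : Measure Ω) [IsProbabilityMeasure P] (hP : P.IsComplete)
    (Γ : Ω → ℝ → Set (Euc d))
    (hval : ∀ ω : Ω, ∀ t ∈ Set.Icc (0:ℝ) T, IsClosed (Γ ω t) ∧ Convex ℝ (Γ ω t))
    (hmeas : ∀ O : Set (Euc d), IsOpen O →
      MeasurableSet {p : Ω × ℝ | p.2 ∈ Set.Icc (0:ℝ) T ∧ (Γ p.1 p.2 ∩ O).Nonempty}) :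
    (∀ ω : Ω,
      IsClosed {y : C(Set.Icc (0:ℝ) T, Euc d) | ∀ t : Set.Icc (0:ℝ) T, y t ∈ Γ ω t} ∧
      Convex ℝ {y : C(Set.Icc (0:ℝ) T, Euc d) | ∀ t : Set.Icc (0:ℝ) T, y t ∈ Γ ω t}) ∧
    (∀ O : Set C(Set.Icc (0:ℝ) T, Euc d), IsOpen O →
      MeasurableSet {ω : Ω |
        ({y : C(Set.Icc (0:ℝ) T, Euc d) | ∀ t : Set.Icc (0:ℝ) T, y t ∈ Γ ω t} ∩ O).Nonempty}) := by
  obtain ⟨hval', hmeas'⟩ := statement8_general P (I := Set.Icc (0:ℝ) T)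
    (Γ := fun ω t => Γ ω t) (fun ω t => (hval ω t t.2).1) (.restrict_snd hmeas)
  exact ⟨fun ω => ⟨(hval' ω).1, (hval' ω).2 fun t => (hval ω t t.2).2⟩, hmeas'⟩
end
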